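/- arXiv:1110.3553 — 12 statements merged into one kernel-verified Lean document; each statement's English description precedes it below -/
import Mathlib

section
/- For every finite lattice L, the c-rank of L equals the height of L, i.e. nk(L) = hgt(L). -/
/-- A list `ℓ 0, …, ℓ (k-1)` of elements of a poset is c-independent with witness
`m 0, …, m (k-1)`: `ℓ j ≰ m j` for all `j`, and `ℓ i ≤ m j` whenever `i < j`. -/
def CIndepList {P : Type*} [PartialOrder P] {k : ℕ} (ℓ m : Fin k → P) : Prop :=
  (∀ j, ¬ ℓ j ≤ m j) ∧ ∀ i j : Fin k, i < j → ℓ i ≤ m j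

/-- The c-rank of a poset: the maximum cardinality of a c-independent subset,
i.e. the largest `k` admitting an injective c-independent list of length `k`. -/
noncomputable def crank (P : Type*) [PartialOrder P] : ℕ :=
  sSup {k | ∃ ℓ m : Fin k → P, Function.Injective ℓ ∧ CIndepList ℓ m}

/-- The height of a poset: the largest `k` such that there is a strict chain
`p 0 < p 1 < ⋯ < p k`. -/
noncomputable def pheight (P : Type*) [PartialOrder P] : ℕ :=
  sSup {k | ∃ p : Fin (k + 1) → P, StrictMono p}

/-- For every finite lattice `L`, the c-rank of `L` equals the height of `L`. -/
theorem crank_eq_pheight (L : Type*) [Lattice L] [Fintype L] :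
    crank L = pheight L := by
  classical
  unfold crank pheight
  rcases isEmpty_or_nonempty L with hL | hL
  · have h1 : {k | ∃ ℓ m : Fin k → L, Function.Injective ℓ ∧ CIndepList ℓ m} = {0} := by
      ext k
      simp only [Set.mem_setOf_eq, Set.mem_singleton_iff]
      constructor
      · rintro ⟨ℓ, -⟩
        by_contra hk
        exact hL.false (ℓ ⟨0, Nat.pos_of_ne_zero hk⟩)
      · rintro rfl
        exact ⟨Fin.elim0, Fin.elim0, fun a => a.elim0, fun a => a.elim0, fun a => a.elim0⟩
    have h2 : {k | ∃ p : Fin (k + 1) → L, StrictMono p} = ∅ := by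
      ext k
      simp only [Set.mem_setOf_eq, Set.mem_empty_iff_false, iff_false]
      rintro ⟨p, -⟩
      exact hL.false (p 0)
    rw [h1, h2]
    simp
  · letI : OrderBot L := Fintype.toOrderBot L
    congr 1
    ext k
    simp only [Set.mem_setOf_eq]
    constructor
    · rintro ⟨ℓ, m, -, h1, h2⟩
      refine ⟨fun j => (Finset.univ.filter fun i : Fin k => i.val < j.val).sup ℓ, ?_⟩
      rw [Fin.strictMono_iff_lt_succ]
      intro i
      refine lt_of_le_not_ge (Finset.sup_mono ?_) fun h => h1 i ?_
      · intro a ha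
        simp only [Finset.mem_filter, Finset.mem_univ, true_and, Fin.val_castSucc,
          Fin.val_succ] at ha ⊢
        omega
      · refine le_trans (Finset.le_sup (f := ℓ) ?_) (h.trans (Finset.sup_le ?_))
        · simp
        · intro a ha
          simp only [Finset.mem_filter, Finset.mem_univ, true_and, Fin.val_castSucc] at ha
          exact h2 a i ha
    · rintro ⟨p, hp⟩
      refine ⟨fun j => p j.succ, fun j => p j.castSucc, ?_, ?_, ?_⟩
      · exact hp.injective.comp (Fin.succ_injective k)
      · intro j h
        exact absurd (hp (Fin.castSucc_lt_succ (i := j))) (not_lt_of_ge h)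
      · intro i j hij
        apply hp.monotone
        rw [Fin.le_def]
        simp only [Fin.val_succ, Fin.val_castSucc]
        exact hij
end

section
/- For every finite lattice L, nk(L) is at most the number of strictly join irreducible elements of L. -/
/-- An element `ℓ` of a lattice is strictly join irreducible if whenever `ℓ` is the
join of a nonempty (finite) subset `X`, `ℓ` itself belongs to `X`. -/
def StrictJoinIrred {L : Type*} [Lattice L] (ℓ : L) : Prop :=
  ∀ (X : Finset L) (hX : X.Nonempty), ℓ = X.sup' hX id → ℓ ∈ X

theorem exists_sji_aux {L : Type*} [Lattice L] [Fintype L] (y : L) (x : L) :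
    ¬ x ≤ y → ∃ s, StrictJoinIrred s ∧ s ≤ x ∧ ¬ s ≤ y := by
  induction x using WellFoundedLT.induction with
  | ind x ih =>
    intro hxy
    by_cases hs : StrictJoinIrred x
    · exact ⟨x, hs, le_rfl, hxy⟩
    · unfold StrictJoinIrred at hs
      push Not at hs
      obtain ⟨X, hX, hx, hnot⟩ := hs
      have h1 : ∃ z ∈ X, ¬ z ≤ y := by
        by_contra hc
        push Not at hc
        exact hxy (hx ▸ Finset.sup'_le hX id hc)
      obtain ⟨z, hz, hzy⟩ := h1
      have hzx : z ≤ x := by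
        rw [hx]
        exact Finset.le_sup' id hz
      have hlt : z < x := lt_of_le_of_ne hzx (fun h => hnot (h ▸ hz))
      obtain ⟨s, h1, h2, h3⟩ := ih z hlt hzy
      exact ⟨s, h1, h2.trans hzx, h3⟩

/-- For every finite lattice `L`, the c-rank of `L` is at most the number of
strictly join irreducible elements of `L`. -/
theorem crank_le_card_sji (L : Type*) [Lattice L] [Fintype L] :
    crank L ≤ {ℓ : L | StrictJoinIrred ℓ}.ncard := by
  apply csSup_le'
  rintro k ⟨l, m, -, h1, h2⟩
  choose s hs hsl hsm using fun j => exists_sji_aux (m j) (l j) (h1 j)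
  have hlt : ∀ i j, i < j → s i ≠ s j := fun i j hij he =>
    hsm j (he ▸ (hsl i).trans (h2 i j hij))
  have hinj : Function.Injective s := by
    intro i j he
    rcases lt_trichotomy i j with h | h | h
    · exact absurd he (hlt i j h)
    · exact h
    · exact absurd he.symm (hlt j i h)
  have hc : (Set.range s).ncard = k := by
    rw [← Set.image_univ, Set.ncard_image_of_injective _ hinj, Set.ncard_univ, Nat.card_fin]
  rw [← hc]
  refine Set.ncard_le_ncard ?_ (Set.toFinite _)
  rintro _ ⟨j, rfl⟩
  exact hs j
end

section
/- Every finite lattice L has a c-independent subset X with |X| = nk(L) such that every element of X is strictly join irreducible and different from the bottom element ⊥. -/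
/-- A subset is c-independent if it can be enumerated without repetition as a
c-independent list admitting some witness. -/
def CIndepSet {P : Type*} [PartialOrder P] (X : Set P) : Prop :=
  ∃ (k : ℕ) (ℓ m : Fin k → P), Function.Injective ℓ ∧ Set.range ℓ = X ∧ CIndepList ℓ m

/-- Every finite lattice `L` has a c-independent subset `X` of cardinality `crank L`
all of whose elements are strictly join irreducible and different from `⊥`. -/
theorem exists_cIndepSet_sji (L : Type*) [Lattice L] [Fintype L] [OrderBot L] :
    ∃ X : Set L, CIndepSet X ∧ X.ncard = crank L ∧
      ∀ x ∈ X, StrictJoinIrred x ∧ x ≠ ⊥ := by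
  have hmem : crank L ∈ {k | ∃ ℓ m : Fin k → L, Function.Injective ℓ ∧ CIndepList ℓ m} := by
    apply Nat.sSup_mem
    · exact ⟨0, fun _ => ⊥, fun _ => ⊥, fun i => i.elim0, fun i => i.elim0, fun i => i.elim0⟩
    · refine ⟨Fintype.card L, ?_⟩
      rintro k ⟨ℓ, m, hinj, -⟩
      simpa using Fintype.card_le_of_injective ℓ hinj
  obtain ⟨ℓ, m, -, h1, h2⟩ := hmem
  have key : ∀ j, ∃ p, p ≤ ℓ j ∧ Minimal (fun x => ¬ x ≤ m j) p := fun j =>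
    (Set.toFinite {x | ¬ x ≤ m j}).exists_le_minimal (h1 j)
  choose p hp hmin using key
  have hlt : ∀ i j, i < j → p i ≤ m j := fun i j hij => (hp i).trans (h2 i j hij)
  have hinj : Function.Injective p := by
    intro i j hij
    rcases lt_trichotomy i j with h | h | h
    · exact absurd (hij ▸ hlt i j h) (hmin j).prop
    · exact h
    · exact absurd (hij ▸ hlt j i h) (hmin i).prop
  refine ⟨Set.range p, ⟨_, p, m, hinj, rfl, fun j => (hmin j).prop, hlt⟩, ?_, ?_⟩
  · rw [← Set.image_univ, Set.ncard_image_of_injective _ hinj, Set.ncard_univ, Nat.card_fin]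
  · rintro _ ⟨j, rfl⟩
    refine ⟨fun X hX hs => ?_, fun h => (hmin j).prop (h ▸ bot_le)⟩
    by_contra hn
    apply (hmin j).prop
    rw [hs]
    refine Finset.sup'_le hX _ fun x hx => ?_
    by_contra hxm
    have hle : x ≤ p j := by
      rw [hs]; exact Finset.le_sup' id hx
    exact hn ((hle.antisymm ((hmin j).le_of_le hxm hle)) ▸ hx)
end

section
/- Let L and L′ be finite lattices and let φ : L → L′ be a surjective sup-map. If ℓ′₁,…,ℓ′_k is a c-independent list in L′ and ℓ₁,…,ℓ_k ∈ L satisfy φ(ℓᵢ) = ℓ′ᵢ for each i (one pullback chosen for each ℓ′ᵢ), then ℓ₁,…,ℓ_k is a c-independent list in L. -/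
/-- Pullbacks along a surjective sup-map of a c-independent list are c-independent:
if `φ : L → L'` is a surjective sup-map, `ℓ' 0, …, ℓ' (k-1)` is c-independent in `L'`
with witness `m' 0, …, m' (k-1)`, and `φ (ℓ i) = ℓ' i` for each `i`, then
`ℓ 0, …, ℓ (k-1)` is a c-independent list in `L` (for some witness). -/
theorem cIndepList_pullback {L L' : Type*}
    [Lattice L] [Fintype L] [OrderBot L] [Lattice L'] [Fintype L'] [OrderBot L']
    (φ : L → L') (hsur : Function.Surjective φ)
    (hsup : ∀ X : Finset L, φ (X.sup id) = X.sup φ)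
    {k : ℕ} (ℓ' m' : Fin k → L') (h' : CIndepList ℓ' m')
    (ℓ : Fin k → L) (hpull : ∀ i, φ (ℓ i) = ℓ' i) :
    ∃ m : Fin k → L, CIndepList ℓ m := by
  classical
  have hmono : ∀ x y : L, x ≤ y → φ x ≤ φ y := by
    intro x y hxy
    have h := hsup {x, y}
    simp only [Finset.sup_insert, Finset.sup_singleton, id, sup_eq_right.mpr hxy] at h
    rw [h]
    exact le_sup_left
  let S : Fin k → Finset L := fun j => Finset.univ.filter (fun x => φ x ≤ m' j)
  refine ⟨fun j => (S j).sup id, ?_, ?_⟩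
  · intro j hj
    apply h'.1 j
    rw [← hpull j]
    refine (hmono _ _ hj).trans ?_
    rw [hsup]
    exact Finset.sup_le (fun x hx => (Finset.mem_filter.mp hx).2)
  · intro i j hij
    have hm : ℓ i ∈ S j :=
      Finset.mem_filter.mpr ⟨Finset.mem_univ _, by rw [hpull]; exact h'.2 i j hij⟩
    exact Finset.le_sup (f := id) hm
end

section
/- If L and L′ are finite lattices and there exists a surjective sup-map φ : L → L′, then nk(L) ≥ nk(L′). -/
/-- If there is a surjective sup-map `φ : L → L'` between finite lattices,
then `crank L ≥ crank L'`. -/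
theorem crank_le_of_surjective_supMap {L L' : Type*}
    [Lattice L] [Fintype L] [OrderBot L] [Lattice L'] [Fintype L'] [OrderBot L']
    (φ : L → L') (hsur : Function.Surjective φ)
    (hsup : ∀ X : Finset L, φ (X.sup id) = X.sup φ) :
    crank L' ≤ crank L := by
  classical
  let g : L' → L := fun y => (Finset.univ.filter (fun x => φ x ≤ y)).sup id
  have hmono : ∀ a b : L, a ≤ b → φ a ≤ φ b := by
    intro a b hab
    have h := hsup {a, b}
    simp only [Finset.sup_insert, Finset.sup_singleton, id, sup_eq_right.2 hab] at h
    rw [h]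
    exact le_sup_left
  have hg : ∀ x y, x ≤ g y ↔ φ x ≤ y := by
    intro x y
    constructor
    · intro h
      refine (hmono _ _ h).trans ?_
      simp only [g]
      rw [hsup]
      refine Finset.sup_le ?_
      intro z hz
      exact (Finset.mem_filter.1 hz).2
    · intro h
      exact Finset.le_sup (f := id) (Finset.mem_filter.2 ⟨Finset.mem_univ x, h⟩)
  choose s hs using hsur
  unfold crank
  refine csSup_le_csSup ⟨Fintype.card L, ?_⟩ ⟨0, Fin.elim0, Fin.elim0, fun i => i.elim0,
    fun i => i.elim0, fun i => i.elim0⟩ ?_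
  · rintro k ⟨l, m, hl, -⟩
    simpa using Fintype.card_le_of_injective l hl
  · rintro k ⟨l, m, hl, h1, h2⟩
    refine ⟨fun i => s (l i), fun i => g (m i), ?_, ?_, ?_⟩
    · intro i j hij
      apply hl
      have := congrArg φ hij
      simpa only [hs] using this
    · intro j
      simp only [hg, hs]
      exact h1 j
    · intro i j hij
      simp only [hg, hs]
      exact h2 i j hij
end

section
/- For every finite poset P, nk(P) = nk(Pᵒᵈ), where Pᵒᵈ denotes the same set with the reversed order. That is, reversing the order on a finite poset does not change its c-rank. -/
theorem cindep_dual_aux {P : Type*} [PartialOrder P] {k : ℕ}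
    (h : ∃ ℓ m : Fin k → P, Function.Injective ℓ ∧ CIndepList ℓ m) :
    ∃ ℓ m : Fin k → Pᵒᵈ, Function.Injective ℓ ∧ CIndepList ℓ m := by
  obtain ⟨ℓ, m, -, h1, h2⟩ := h
  have hm : Function.Injective m := by
    intro i j hij
    rcases lt_trichotomy i j with hlt | heq | hgt
    · exact absurd (hij ▸ h2 i j hlt) (h1 i)
    · exact heq
    · exact absurd (hij ▸ h2 j i hgt) (h1 j)
  refine ⟨fun i => OrderDual.toDual (m i.rev), fun i => OrderDual.toDual (ℓ i.rev), ?_, ?_, ?_⟩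
  · intro i j hij
    exact Fin.rev_injective (hm (OrderDual.toDual.injective hij))
  · intro j hj
    exact h1 j.rev (OrderDual.toDual_le_toDual.mp hj)
  · intro i j hij
    exact OrderDual.toDual_le_toDual.mpr (h2 j.rev i.rev (Fin.rev_lt_rev.mpr hij))

/-- Reversing the order on a finite poset does not change its c-rank. -/
theorem crank_orderDual (P : Type*) [PartialOrder P] [Fintype P] :
    crank P = crank Pᵒᵈ := by
  unfold crank
  congr 1
  ext k
  exact ⟨cindep_dual_aux, fun h => cindep_dual_aux (P := Pᵒᵈ) h⟩
end

section
/- Let L be a finite lattice with top element ⊤ and let ℓ₁,…,ℓ_k be a c-independent list with witness m₁,…,m_k. Define m̃_j := m_j ∧ m_{j+1} ∧ ⋯ ∧ m_k for j = 1,…,k, and define c_j := m̃_{j+1} for 1 ≤ j ≤ k−1 and c_k := ⊤. Then: (1) m̃₁ < m̃₂ < ⋯ < m̃_k < ⊤ is a strict chain in L; (2) the chain c₁ < c₂ < ⋯ < c_k is a c-independent list with witness m̃₁,…,m̃_k; (3) ℓ₁,…,ℓ_k is a push of this chain, i.e. ℓ_j ≤ c_j and ℓ_j ≰ m̃_j for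 every j. In particular, every c-independent subset of a finite lattice is a push of a strict chain. -/
/-- Every c-independent list in a finite lattice is a push of a strict chain:
given a c-independent list `ℓ` with witness `m`, set `m̃ j := m j ∧ m (j+1) ∧ ⋯ ∧ m (k-1)`
and `c j := m̃ (j+1)` (with `c (k-1) := ⊤`). Then `m̃ 0 < m̃ 1 < ⋯ < m̃ (k-1) < ⊤` is a
strict chain, the chain `c` is a c-independent list with witness `m̃`, and `ℓ` is a push
of `c` with respect to `m̃`, i.e. `ℓ j ≤ c j` and `ℓ j ≰ m̃ j` for every `j`. -/
theorem cIndepList_is_push_of_chain {L : Type*} [Lattice L] [Fintype L] [OrderTop L]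
    {k : ℕ} (ℓ m : Fin k → L) (h : CIndepList ℓ m) (mt c : Fin k → L)
    (hmt : ∀ j : Fin k, mt j = (Finset.Ici j).inf' ⟨j, Finset.mem_Ici.2 le_rfl⟩ m)
    (hc : ∀ j : Fin k, c j = if h : (j : ℕ) + 1 < k then mt ⟨(j : ℕ) + 1, h⟩ else ⊤) :
    StrictMono mt ∧ (∀ j, mt j < ⊤) ∧ CIndepList c mt ∧
      ∀ j, ℓ j ≤ c j ∧ ¬ ℓ j ≤ mt j := by
  obtain ⟨h1, h2⟩ := h
  have hle : ∀ (x : L) (j : Fin k), x ≤ mt j ↔ ∀ i, j ≤ i → x ≤ m i := by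
    intro x j
    rw [hmt]
    exact (Finset.le_inf'_iff _ _).trans (by simp)
  have hn : ∀ j, ¬ ℓ j ≤ mt j := fun j hj => h1 j ((hle _ _).1 hj j le_rfl)
  have hlt : ∀ i j, i < j → ℓ i ≤ mt j := fun i j hij =>
    (hle _ _).2 fun a ha => h2 i a (lt_of_lt_of_le hij ha)
  have hmono : Monotone mt := fun i j hij =>
    (hle _ _).2 fun a ha => (hle _ i).1 le_rfl a (hij.trans ha)
  have hlc : ∀ j, ℓ j ≤ c j := by
    intro j
    rw [hc]
    split_ifs with hj
    · exact hlt _ _ (Fin.lt_def.2 (Nat.lt_succ_self _))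
    · exact le_top
  refine ⟨?_, ?_, ⟨?_, ?_⟩, fun j => ⟨hlc j, hn j⟩⟩
  · intro i j hij
    refine lt_of_le_of_ne (hmono hij.le) fun he => hn i ?_
    rw [he]
    exact hlt i j hij
  · intro j
    refine lt_of_le_of_ne le_top fun he => hn j ?_
    rw [he]
    exact le_top
  · exact fun j hj => hn j ((hlc j).trans hj)
  · intro i j hij
    have hi : (i : ℕ) + 1 < k := lt_of_le_of_lt (Fin.lt_def.1 hij) j.2
    rw [hc, dif_pos hi]
    exact hmono (Fin.le_def.2 (Fin.lt_def.1 hij))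
end

section
/- Let L be a finite lattice with bottom element ⊥ and top element ⊤. A subset X ⊆ L is c-independent if and only if there exists a maximal chain ⊥ = p_k ⋖ p_{k−1} ⋖ ⋯ ⋖ p_1 ⋖ p_0 = ⊤ in L such that X is a partial cross section of the partition of L ∖ {⊥} associated to this chain. -/
/-- A subset `X` of a finite lattice `L` is c-independent iff there is a maximal chain
`⊤ = p 0 ⋗ p 1 ⋗ ⋯ ⋗ p k = ⊥` (each step a covering) such that `X` is a partial cross
section of the associated partition of `L \ {⊥}`, whose blocks are
`Q i = {x | x ≤ p i ∧ x ≰ p (i+1)}` for `i = 0, …, k-1`: every element of `X` lies in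
some block, and no two distinct elements of `X` lie in the same block. -/
theorem cIndepSet_iff_partial_cross_section {L : Type*} [Lattice L] [Fintype L]
    [BoundedOrder L] (X : Set L) :
    CIndepSet X ↔
      ∃ (k : ℕ) (p : Fin (k + 1) → L), p 0 = ⊤ ∧ p (Fin.last k) = ⊥ ∧
        (∀ i : Fin k, p i.succ ⋖ p i.castSucc) ∧
        (∀ x ∈ X, ∃ i : Fin k, x ≤ p i.castSucc ∧ ¬ x ≤ p i.succ) ∧
        (∀ x ∈ X, ∀ y ∈ X, ∀ i : Fin k,
          x ≤ p i.castSucc ∧ ¬ x ≤ p i.succ → y ≤ p i.castSucc ∧ ¬ y ≤ p i.succ →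
          x = y) := by
  classical
  constructor
  · rintro ⟨n, ℓ, m, hinj, rfl, h1, h2⟩
    let q : Fin n → L := fun j => (Finset.univ.filter (fun i => j ≤ i)).inf m
    have hqm : ∀ j, q j ≤ m j := fun j => Finset.inf_le (by simp)
    have hlq : ∀ i j, i < j → ℓ i ≤ q j := by
      intro i j hij
      refine Finset.le_inf ?_
      intro b hb
      simp only [Finset.mem_filter, Finset.mem_univ, true_and] at hb
      exact h2 i b (lt_of_lt_of_le hij hb)
    have hlnq : ∀ j, ¬ ℓ j ≤ q j := fun j h => h1 j (h.trans (hqm j))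
    have hqmono : Monotone q := by
      intro i j hij
      refine Finset.inf_mono ?_
      intro b hb
      simp only [Finset.mem_filter, Finset.mem_univ, true_and] at hb ⊢
      exact hij.trans hb
    have hchain : IsChain (· ≤ ·) (Set.range q) := by
      rintro _ ⟨i, rfl⟩ _ ⟨j, rfl⟩ _
      rcases le_total i j with h | h
      · exact Or.inl (hqmono h)
      · exact Or.inr (hqmono h)
    obtain ⟨s, hs⟩ := hchain.exists_subset_flag
    obtain ⟨k, hk⟩ : ∃ k, Fintype.card (s : Type _)ᵒᵈ = k + 1 :=
      Nat.exists_eq_succ_of_ne_zero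
        (@Fintype.card_ne_zero _ _ ⟨OrderDual.toDual ⟨⊤, s.top_mem⟩⟩)
    let e : Fin (k + 1) ≃o (s : Type _)ᵒᵈ := Fintype.orderIsoFinOfCardEq _ hk
    let p : Fin (k + 1) → L := fun i => ((OrderDual.ofDual (e i) : s) : L)
    have hp : ∀ i j, p i ≤ p j ↔ j ≤ i := by
      intro i j
      rw [← e.le_iff_le]
      rfl
    have hps : ∀ x ∈ s, ∃ i, p i = x := by
      intro x hx
      refine ⟨e.symm (OrderDual.toDual ⟨x, hx⟩), ?_⟩
      simp [p]
    have h0 : p 0 = ⊤ := by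
      obtain ⟨t, ht⟩ := hps ⊤ s.top_mem
      exact top_le_iff.1 (ht ▸ (hp t 0).2 (Fin.zero_le t))
    have hl : p (Fin.last k) = ⊥ := by
      obtain ⟨t, ht⟩ := hps ⊥ s.bot_mem
      exact le_bot_iff.1 (ht ▸ (hp _ t).2 (Fin.le_last t))
    refine ⟨k, p, h0, hl, ?_, ?_, ?_⟩
    · intro i
      have hc : e i.castSucc ⋖ e i.succ := by
        rw [apply_covBy_apply_iff]
        exact Fin.covBy_iff.2 (by simp)
      exact Flag.coe_covBy_coe.2 hc.ofDual
    · rintro _ ⟨j, rfl⟩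
      by_contra hcon
      push Not at hcon
      have : ∀ i : Fin (k + 1), ℓ j ≤ p i := by
        intro i
        induction i using Fin.induction with
        | zero => rw [h0]; exact le_top
        | succ i ih => exact hcon i ih
      exact h1 j ((this (Fin.last k)).trans (hl ▸ bot_le))
    · have key : ∀ a b, a < b → ∀ i : Fin k, ¬ ℓ a ≤ p i.succ → ¬ ℓ b ≤ p i.castSucc := by
        intro a b hab i ha hb
        obtain ⟨t, ht⟩ := hps (q b) (hs ⟨b, rfl⟩)
        have hti : t ≤ i.castSucc := by
          by_contra hc
          have hle : i.succ ≤ t := by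
            rw [not_le, Fin.lt_def] at hc
            rw [Fin.le_def]
            simpa using hc
          have h3 : p t ≤ p i.succ := (hp _ _).2 hle
          rw [ht] at h3
          exact ha ((hlq a b hab).trans h3)
        exact hlnq b (hb.trans (ht ▸ (hp _ _).2 hti))
      rintro _ ⟨a, rfl⟩ _ ⟨b, rfl⟩ i ⟨ha, ha'⟩ ⟨hb, hb'⟩
      rcases lt_trichotomy a b with h | h | h
      · exact absurd hb (key a b h i ha')
      · rw [h]
      · exact absurd ha (key b a h i hb')
  · rintro ⟨k, p, h0, hl, hcov, hex, huniq⟩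
    have hanti : Antitone p := by
      rw [Fin.antitone_iff_succ_le]
      exact fun i => (hcov i).le
    let S : Finset (Fin k) :=
      Finset.univ.filter (fun i => ∃ x ∈ X, x ≤ p i.castSucc ∧ ¬ x ≤ p i.succ)
    have hS : ∀ i : S, ∃ x ∈ X, x ≤ p i.1.castSucc ∧ ¬ x ≤ p i.1.succ := by
      intro i
      exact (Finset.mem_filter.1 i.2).2
    choose g hgX hg1 hg2 using hS
    let e := S.orderIsoOfFin rfl
    have hlt : ∀ i j : S, i < j → g j ≤ p i.1.succ := by
      intro i j hij
      refine (hg1 j).trans (hanti ?_)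
      have : i.1 < j.1 := hij
      rw [Fin.le_def]
      simpa using this
    refine ⟨S.card, fun j => g (e j.rev), fun j => p (e j.rev).1.succ, ?_, ?_, ?_, ?_⟩
    · have hgi : Function.Injective g := by
        intro i j hij
        rcases lt_trichotomy i j with h | h | h
        · exact absurd (hij ▸ hlt i j h) (hg2 i)
        · exact h
        · exact absurd (hij ▸ hlt j i h) (hg2 j)
      exact hgi.comp (e.injective.comp Fin.rev_injective)
    · ext x
      constructor
      · rintro ⟨j, rfl⟩
        exact hgX _
      · intro hx
        obtain ⟨i, hi⟩ := hex x hx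
        have hiS : i ∈ S := Finset.mem_filter.2 ⟨Finset.mem_univ _, x, hx, hi⟩
        refine ⟨(e.symm ⟨i, hiS⟩).rev, ?_⟩
        simp only [Fin.rev_rev, OrderIso.apply_symm_apply]
        exact huniq _ (hgX _) x hx i ⟨hg1 ⟨i, hiS⟩, hg2 ⟨i, hiS⟩⟩ hi
    · exact fun j => hg2 _
    · intro i j hij
      exact hlt _ _ (e.lt_iff_lt.2 (Fin.rev_lt_rev.2 hij))
end

section
/- A finite lattice L is distributive if and only if every strictly meet irreducible element of L is meet irreducible. -/
/-- An element `m` of a lattice is meet irreducible if whenever `m` is above the meet of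
a nonempty (finite) subset `X`, it is above some member of `X`. -/
def MeetIrred {L : Type*} [Lattice L] (m : L) : Prop :=
  ∀ (X : Finset L) (hX : X.Nonempty), X.inf' hX id ≤ m → ∃ x ∈ X, x ≤ m

/-- An element `m` of a lattice is strictly meet irreducible if whenever `m` is the meet
of a nonempty (finite) subset `X`, `m` itself belongs to `X`. -/
def StrictMeetIrred {L : Type*} [Lattice L] (m : L) : Prop :=
  ∀ (X : Finset L) (hX : X.Nonempty), m = X.inf' hX id → m ∈ X

/-- A finite lattice is distributive iff every strictly meet irreducible element is
meet irreducible. -/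
theorem distrib_iff_smi_imp_mi (L : Type*) [Lattice L] [Fintype L] :
    (∀ s t t' : L, s ⊓ (t ⊔ t') = (s ⊓ t) ⊔ (s ⊓ t')) ↔
      ∀ m : L, StrictMeetIrred m → MeetIrred m := by
  classical
  have pair : ∀ x y : L, ∀ h : ({x, y} : Finset L).Nonempty,
      ({x, y} : Finset L).inf' h id = x ⊓ y := by
    intro x y h
    apply le_antisymm
    · exact le_inf (Finset.inf'_le id (by simp)) (Finset.inf'_le id (by simp))
    · apply Finset.le_inf'
      intro b hb
      rcases Finset.mem_insert.1 hb with rfl | hb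
      · exact inf_le_left
      · rw [Finset.mem_singleton.1 hb]
        exact inf_le_right
  constructor
  · intro hd m hm
    have key : ∀ x y : L, x ⊓ y ≤ m → x ≤ m ∨ y ≤ m := by
      intro x y hxy
      have e : m = (m ⊔ x) ⊓ (m ⊔ y) := by
        apply le_antisymm (le_inf le_sup_left le_sup_left)
        rw [hd]
        apply sup_le inf_le_right
        rw [inf_comm, hd]
        apply sup_le inf_le_right
        rw [inf_comm]
        exact hxy
      have h := hm {m ⊔ x, m ⊔ y} (by simp) (by rw [pair]; exact e)
      rcases Finset.mem_insert.1 h with h | h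
      · left
        rw [h]
        exact le_sup_right
      · right
        rw [Finset.mem_singleton.1 h]
        exact le_sup_right
    intro X hX
    induction hX using Finset.Nonempty.cons_induction with
    | singleton a => simp
    | cons a s ha hs ih =>
      intro h
      rw [Finset.inf'_cons hs] at h
      rcases key _ _ h with h | h
      · exact ⟨a, by simp, h⟩
      · obtain ⟨x, hx, hxm⟩ := ih h
        exact ⟨x, by simp [hx], hxm⟩
  · intro H s t t'
    apply le_antisymm _ (sup_le (inf_le_inf_left s le_sup_left) (inf_le_inf_left s le_sup_right))
    by_contra hn
    obtain ⟨m, hrm, hmax⟩ := (Set.toFinite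
      {m : L | ¬ s ⊓ (t ⊔ t') ≤ m}).exists_le_maximal hn
    have hsmi : StrictMeetIrred m := by
      intro X hX he
      by_contra hmX
      apply hmax.1
      rw [he]
      apply Finset.le_inf'
      intro x hx
      by_contra hx'
      have hle : m ≤ x := by
        rw [he]
        exact Finset.inf'_le id hx
      have : x = m := le_antisymm (hmax.2 hx' hle) hle
      exact hmX (this ▸ hx)
    have hmi := H m hsmi
    have hs : ¬ s ≤ m := fun h => hmax.1 (inf_le_left.trans h)
    have key : ∀ y : L, s ⊓ y ≤ m → y ≤ m := by
      intro y hy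
      obtain ⟨x, hx, hxm⟩ := hmi {s, y} (by simp) (by rw [pair]; exact hy)
      rcases Finset.mem_insert.1 hx with h | h
      · exact absurd (h ▸ hxm) hs
      · rw [← Finset.mem_singleton.1 h]
        exact hxm
    exact hmax.1 (inf_le_right.trans
      (sup_le (key t (le_sup_left.trans hrm)) (key t' (le_sup_right.trans hrm))))
end

section
/- In every finite lattice L, the number of meet irreducible elements different from the top element ⊤ equals the number of join irreducible elements different from the bottom element ⊥. -/
/-- An element `ℓ` of a lattice is join irreducible if whenever `ℓ` is below the join of
a nonempty (finite) subset `X`, it is below some member of `X`. -/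
def JoinIrred {L : Type*} [Lattice L] (ℓ : L) : Prop :=
  ∀ (X : Finset L) (hX : X.Nonempty), ℓ ≤ X.sup' hX id → ∃ x ∈ X, ℓ ≤ x

/-- `m` and `j` split the lattice into the ideal below `m` and the filter above `j`. -/
def Splits' {L : Type*} [Lattice L] (m j : L) : Prop := ∀ x, x ≤ m ↔ ¬ j ≤ x

theorem exists_j {L : Type*} [Lattice L] [Fintype L] [BoundedOrder L] {m : L}
    (h : MeetIrred m) (hm : m ≠ ⊤) : ∃ j, Splits' m j := by
  classical
  have hX : (Finset.univ.filter (fun x : L => ¬ x ≤ m)).Nonempty :=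
    ⟨⊤, by simpa using hm⟩
  refine ⟨Finset.inf' _ hX id, fun x => ⟨fun hx hj => ?_, fun hx => ?_⟩⟩
  · obtain ⟨y, hy, hym⟩ := h _ hX (hj.trans hx)
    exact (Finset.mem_filter.1 hy).2 hym
  · by_contra hxm
    exact hx (Finset.inf'_le id (b := x) (Finset.mem_filter.2 ⟨Finset.mem_univ _, hxm⟩))

theorem exists_m {L : Type*} [Lattice L] [Fintype L] [BoundedOrder L] {j : L}
    (h : JoinIrred j) (hj : j ≠ ⊥) : ∃ m, Splits' m j := by
  classical
  have hX : (Finset.univ.filter (fun x : L => ¬ j ≤ x)).Nonempty :=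
    ⟨⊥, by simpa using hj⟩
  refine ⟨Finset.sup' _ hX id, fun x => ⟨fun hx hjx => ?_, fun hx => ?_⟩⟩
  · obtain ⟨y, hy, hym⟩ := h _ hX (hjx.trans hx)
    exact (Finset.mem_filter.1 hy).2 hym
  · exact Finset.le_sup' id (b := x) (Finset.mem_filter.2 ⟨Finset.mem_univ _, hx⟩)

theorem Splits'.ji {L : Type*} [Lattice L] [BoundedOrder L] {m j : L}
    (h : Splits' m j) : JoinIrred j ∧ j ≠ ⊥ := by
  refine ⟨fun X hX hj => ?_, fun e => (h ⊥).1 bot_le e.le⟩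
  by_contra! hc
  exact (h _).1 (Finset.sup'_le hX id fun x hx => (h x).2 (hc x hx)) hj

theorem Splits'.mi {L : Type*} [Lattice L] [BoundedOrder L] {m j : L}
    (h : Splits' m j) : MeetIrred m ∧ m ≠ ⊤ := by
  refine ⟨fun X hX hm => ?_, fun e => (h ⊤).1 e.ge le_top⟩
  by_contra! hc
  exact (h _).1 hm (Finset.le_inf' hX id fun x hx => by
    by_contra hn
    exact hc x hx ((h x).2 hn))

/-- In every finite lattice, the number of meet irreducible elements different from `⊤`
equals the number of join irreducible elements different from `⊥`. -/
theorem card_mi_eq_card_ji (L : Type*) [Lattice L] [Fintype L] [BoundedOrder L] :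
    {m : L | MeetIrred m ∧ m ≠ ⊤}.ncard = {ℓ : L | JoinIrred ℓ ∧ ℓ ≠ ⊥}.ncard := by
  have H : ∀ m ∈ {m : L | MeetIrred m ∧ m ≠ ⊤}, ∃ j, Splits' m j :=
    fun m hm => exists_j hm.1 hm.2
  choose f hf using H
  refine Set.ncard_congr f (fun m hm => (hf m hm).ji) (fun a b ha hb hab => ?_)
    (fun j hj => ?_)
  · have h1 := hf a ha
    have h2 := hf b hb
    rw [← hab] at h2
    exact le_antisymm ((h2 a).2 ((h1 a).1 le_rfl)) ((h1 b).2 ((h2 b).1 le_rfl))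
  · obtain ⟨m, hm⟩ := exists_m hj.1 hj.2
    have h1 := hf m hm.mi
    refine ⟨m, hm.mi, le_antisymm ?_ ?_⟩
    · by_contra hc
      exact (hm j).1 ((h1 j).2 hc) le_rfl
    · by_contra hc
      exact (h1 _).1 ((hm _).2 hc) le_rfl
end

section
/- If a simple hereditary collection (E, 𝓗) has a boolean representation, then there exist finitely many partitions 𝒬₁,…,𝒬_ℓ of E such that 𝓗 is exactly the collection of subsets of E that are a partial cross section of at least one of the partitions 𝒬₁,…,𝒬_ℓ. -/
/-- The subsets of `E` "independent" with respect to a boolean matrix `A : R → E → Bool`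
(superboolean column independence): a subset `J` is independent iff it can be enumerated
without repetition as `x 0, …, x (k-1)` admitting rows `r 0, …, r (k-1)` with
`A (r j) (x j) = 1` for all `j` and `A (r j) (x i) = 0` for all `i > j`. -/
def BoolIndep {E R : Type*} (A : R → E → Bool) (J : Finset E) : Prop :=
  ∃ (k : ℕ) (x : Fin k → E) (r : Fin k → R), Function.Injective x ∧
    (↑J = Set.range x) ∧ (∀ j, A (r j) (x j) = true) ∧
    (∀ i j : Fin k, j < i → A (r j) (x i) = false)

theorem boolIndep_of_level {E R : Type*} [DecidableEq E] (A : R → E → Bool) (f : E → ℕ) (g : E → R)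
    (h1 : ∀ e, A (g e) e = true) (h2 : ∀ e e', f e < f e' → A (g e) e' = false)
    (J : Finset E) (hJ : Set.InjOn f (J : Set E)) : BoolIndep A J := by
  classical
  let o := (J.image f).orderEmbOfFin rfl
  have ho : ∀ i, ∃ e ∈ J, f e = o i := fun i =>
    Finset.mem_image.1 (Finset.orderEmbOfFin_mem (J.image f) rfl i)
  choose x hxJ hxf using ho
  refine ⟨_, x, fun i => g (x i), ?_, ?_, fun j => h1 _, ?_⟩
  · intro i j hij
    apply o.injective
    rw [← hxf, ← hxf, hij]
  · ext e
    constructor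
    · intro he
      have : f e ∈ Set.range o := by
        have := Finset.range_orderEmbOfFin (J.image f) rfl
        rw [this]
        exact Finset.mem_coe.2 (Finset.mem_image_of_mem f he)
      obtain ⟨i, hi⟩ := this
      exact ⟨i, hJ (hxJ i) he (by rw [hxf, hi])⟩
    · rintro ⟨i, rfl⟩
      exact hxJ i
  · intro i j hij
    apply h2
    rw [hxf, hxf]
    exact o.strictMono hij

theorem exists_level {E R : Type*} (A : R → E → Bool) (hA : ∀ e, ∃ r, A r e = true)
    (J : Finset E) (hJ : BoolIndep A J) :
    ∃ (f : E → ℕ) (g : E → R), (∀ e, A (g e) e = true) ∧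
      (∀ e e', f e < f e' → A (g e) e' = false) ∧ Set.InjOn f (J : Set E) := by
  classical
  obtain ⟨k, x, r, -, hx, hd, hz⟩ := hJ
  choose s hs using hA
  have hP : ∀ e, ∃ n, n = k ∨ ∃ h : n < k, A (r ⟨n, h⟩) e = true := fun e => ⟨k, Or.inl rfl⟩
  have hle : ∀ e, Nat.find (hP e) ≤ k := fun e => Nat.find_min' (hP e) (Or.inl rfl)
  have hfx : ∀ i : Fin k, Nat.find (hP (x i)) = i := by
    intro i
    rw [Nat.find_eq_iff]
    refine ⟨Or.inr ⟨i.2, hd i⟩, ?_⟩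
    rintro n hn (h | ⟨h, h'⟩)
    · omega
    · rw [hz i ⟨n, h⟩ hn] at h'
      cases h'
  refine ⟨fun e => Nat.find (hP e),
    fun e => if h : Nat.find (hP e) < k then r ⟨_, h⟩ else s e, ?_, ?_, ?_⟩
  · intro e
    dsimp only
    split_ifs with h
    · rcases Nat.find_spec (hP e) with h' | ⟨_, h'⟩
      · omega
      · exact h'
    · exact hs e
  · intro e e' hlt
    dsimp only at hlt ⊢
    have hk : Nat.find (hP e) < k := lt_of_lt_of_le hlt (hle e')
    rw [dif_pos hk]
    have := Nat.find_min (hP e') hlt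
    by_contra hc
    exact this (Or.inr ⟨hk, by simpa using hc⟩)
  · rw [hx]
    rintro _ ⟨i, rfl⟩ _ ⟨j, rfl⟩ hij
    dsimp only at hij
    rw [hfx, hfx] at hij
    rw [Fin.ext hij]

theorem exists_partition {E : Type*} [Fintype E] [DecidableEq E] (f : E → ℕ) :
    ∃ Q : Finpartition (Finset.univ : Finset E), ∀ J : Finset E,
      (∀ P ∈ Q.parts, (J ∩ P).card ≤ 1) ↔ Set.InjOn f (J : Set E) := by
  classical
  refine ⟨Finpartition.ofSetoid (Setoid.ker f), fun J => ?_⟩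
  constructor
  · intro h a ha b hb hab
    have h' := h ((Finpartition.ofSetoid (Setoid.ker f)).part a)
      ((Finpartition.ofSetoid (Setoid.ker f)).part_mem.2 (Finset.mem_univ a))
    rw [Finset.card_le_one] at h'
    apply h' <;> rw [Finset.mem_inter, Finpartition.mem_part_ofSetoid_iff_rel]
    · exact ⟨ha, rfl⟩
    · exact ⟨hb, hab⟩
  · intro h P hP
    rw [Finset.card_le_one]
    intro a ha b hb
    rw [Finset.mem_inter] at ha hb
    apply h ha.1 hb.1
    have : b ∈ (Finpartition.ofSetoid (Setoid.ker f)).part a := by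
      rw [Finpartition.part_eq_of_mem _ hP ha.2]
      exact hb.2
    rw [Finpartition.mem_part_ofSetoid_iff_rel] at this
    exact this

/-- If a simple hereditary collection `(E, H)` has a boolean representation, then there
are finitely many partitions `Q 0, …, Q (l-1)` of `E` such that `H` is exactly the
collection of subsets of `E` that are a partial cross section (at most one element in
each block) of at least one of these partitions. -/
theorem hereditary_boolean_rep_partial_cross_sections
    {E : Type*} [Fintype E] [DecidableEq E] (H : Set (Finset E))
    (hne : H.Nonempty) (hher : ∀ J ∈ H, ∀ J' ⊆ J, J' ∈ H)
    (hsimple : ∀ J : Finset E, J.card ≤ 2 → J ∈ H)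
    (hrep : ∃ (R : Type) (_ : Fintype R) (A : R → E → Bool),
      ∀ J : Finset E, J ∈ H ↔ BoolIndep A J) :
    ∃ (l : ℕ) (Q : Fin l → Finpartition (Finset.univ : Finset E)),
      ∀ J : Finset E, J ∈ H ↔ ∃ t : Fin l, ∀ P ∈ (Q t).parts, (J ∩ P).card ≤ 1 := by
  classical
  obtain ⟨R, _, A, hA⟩ := hrep
  have hA1 : ∀ e, ∃ r, A r e = true := by
    intro e
    obtain ⟨k, x, r, -, hx, hd, -⟩ := (hA {e}).1 (hsimple {e} (by simp))
    have : e ∈ Set.range x := by rw [← hx]; simp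
    obtain ⟨i, rfl⟩ := this
    exact ⟨r i, hd i⟩
  have key : ∀ J : {J : Finset E // J ∈ H}, ∃ Q : Finpartition (Finset.univ : Finset E),
      (∀ P ∈ Q.parts, (J.1 ∩ P).card ≤ 1) ∧
      ∀ J' : Finset E, (∀ P ∈ Q.parts, (J' ∩ P).card ≤ 1) → J' ∈ H := by
    rintro ⟨J, hJ⟩
    obtain ⟨f, g, h1, h2, h3⟩ := exists_level A hA1 J ((hA J).1 hJ)
    obtain ⟨Q, hQ⟩ := exists_partition f
    exact ⟨Q, (hQ J).2 h3, fun J' h => (hA J').2 (boolIndep_of_level A f g h1 h2 J' ((hQ J').1 h))⟩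
  choose Q hQ1 hQ2 using key
  let φ := Fintype.equivFin {J : Finset E // J ∈ H}
  refine ⟨_, fun t => Q (φ.symm t), fun J => ⟨fun hJ => ⟨φ ⟨J, hJ⟩, ?_⟩, ?_⟩⟩
  · dsimp only
    rw [Equiv.symm_apply_apply]
    exact hQ1 ⟨J, hJ⟩
  · rintro ⟨t, ht⟩
    exact hQ2 _ J ht
end

section
/- Let E = {1,2,3,4,5} and let 𝓗 be the collection of all subsets of E contained in at least one of the five sets {1,2,3}, {1,2,4}, {2,3,5}, {1,4,5}, {3,4,5}. Then (E, 𝓗) is a hereditary collection satisfying the point replacement property, but (E, 𝓗) admits no boolean representation. -/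
/-- The hereditary collection on `E = {1,2,3,4,5}` (here modeled as `Fin 5`) whose
members are the subsets of the five bases `{1,2,3}, {1,2,4}, {2,3,5}, {1,4,5}, {3,4,5}`
(here `{0,1,2}, {0,1,3}, {1,2,4}, {0,3,4}, {2,3,4}`). -/
def ExH : Set (Finset (Fin 5)) :=
  {J | J ⊆ {0, 1, 2} ∨ J ⊆ {0, 1, 3} ∨ J ⊆ {1, 2, 4} ∨ J ⊆ {0, 3, 4} ∨ J ⊆ {2, 3, 4}}

theorem BoolIndep.extend {E R : Type*} [DecidableEq E] {A : R → E → Bool} {J : Finset E}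
    (h : BoolIndep A J) (r : R) (c : E) (hc : A r c = true) (hJ : ∀ y ∈ J, A r y = false) :
    BoolIndep A (insert c J) := by
  obtain ⟨k, x, ρ, hx, hr, h1, h0⟩ := h
  have hm : ∀ i, x i ∈ J := fun i => by
    have : x i ∈ (↑J : Set E) := hr ▸ Set.mem_range_self i
    exact this
  refine ⟨k + 1, Fin.cons c x, Fin.cons r ρ, ?_, ?_, ?_, ?_⟩
  · rw [Fin.cons_injective_iff]
    refine ⟨?_, hx⟩
    rintro ⟨i, rfl⟩
    have := hJ _ (hm i)
    simp_all
  · rw [Finset.coe_insert, hr, Fin.range_cons]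
  · intro j
    refine Fin.cases ?_ (fun j => ?_) j
    · simpa using hc
    · simpa using h1 j
  · intro i j
    refine Fin.cases ?_ (fun i => ?_) i
    · intro h; exact absurd h (Fin.not_lt_zero j)
    · refine Fin.cases ?_ (fun j => ?_) j
      · intro _; simpa using hJ _ (hm i)
      · intro h; simpa using h0 i j (by simpa using h)

theorem BoolIndep.first {E R : Type*} {A : R → E → Bool} {J : Finset E}
    (h : BoolIndep A J) (hJ : J.Nonempty) :
    ∃ c ∈ J, ∃ r, A r c = true ∧ ∀ y ∈ J, y ≠ c → A r y = false := by
  obtain ⟨k, x, ρ, hx, hr, h1, h0⟩ := h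
  have hm : ∀ y, y ∈ J ↔ ∃ i, x i = y := fun y => by
    rw [← Finset.mem_coe, hr, Set.mem_range]
  obtain ⟨y, hy⟩ := hJ
  obtain ⟨i, -⟩ := (hm y).1 hy
  have hk : 0 < k := i.pos
  refine ⟨x ⟨0, hk⟩, (hm _).2 ⟨_, rfl⟩, ρ ⟨0, hk⟩, h1 _, ?_⟩
  intro y hy hne
  obtain ⟨i, rfl⟩ := (hm y).1 hy
  apply h0
  rw [Fin.lt_def]
  rcases Nat.eq_zero_or_pos i.val with h | h
  · exact absurd (congrArg x (Fin.ext h)) hne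
  · exact h

/-- `(Fin 5, ExH)` is a hereditary collection satisfying the point replacement property,
yet it admits no boolean representation. -/
theorem exists_PR_hereditary_without_boolean_rep :
    (ExH.Nonempty ∧ ∀ J ∈ ExH, ∀ J' ⊆ J, J' ∈ ExH) ∧
    (∀ p : Fin 5, ({p} : Finset (Fin 5)) ∈ ExH → ∀ J ∈ ExH, J.Nonempty →
      ∃ x ∈ J, insert p (J.erase x) ∈ ExH) ∧
    ¬ ∃ (R : Type) (_ : Fintype R) (A : R → Fin 5 → Bool),
        ∀ J : Finset (Fin 5), J ∈ ExH ↔ BoolIndep A J := by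
  refine ⟨⟨⟨∅, Or.inl (by simp)⟩, ?_⟩, ?_, ?_⟩
  · rintro J hJ J' hs
    rcases hJ with h | h | h | h | h
    · exact Or.inl (hs.trans h)
    · exact Or.inr (Or.inl (hs.trans h))
    · exact Or.inr (Or.inr (Or.inl (hs.trans h)))
    · exact Or.inr (Or.inr (Or.inr (Or.inl (hs.trans h))))
    · exact Or.inr (Or.inr (Or.inr (Or.inr (hs.trans h))))
  · unfold ExH
    simp only [Set.mem_ofPred_eq, Finset.nonempty_iff_ne_empty]
    intro p _
    revert p
    set_option synthInstance.maxHeartbeats 400000 in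
    set_option synthInstance.maxSize 100000 in
    set_option maxRecDepth 100000 in
    decide
  · rintro ⟨R, _, A, hA⟩
    have key : ∀ a b c : Fin 5, ({a, b} : Finset (Fin 5)) ∈ ExH →
        ({c, a, b} : Finset (Fin 5)) ∉ ExH →
        ∀ r, A r a = false → A r b = false → A r c = false := by
      intro a b c hab hc r ha hb
      by_contra h
      refine hc ((hA _).2 (((hA _).1 hab).extend r c (by simpa using h) ?_))
      intro y hy
      simp only [Finset.mem_insert, Finset.mem_singleton] at hy
      rcases hy with rfl | rfl <;> assumption
    have k1 := key 0 1 4 (by unfold ExH; simp only [Set.mem_ofPred_eq]; decide) (by unfold ExH; simp only [Set.mem_ofPred_eq]; decide)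
    have k2 := key 0 4 2 (by unfold ExH; simp only [Set.mem_ofPred_eq]; decide) (by unfold ExH; simp only [Set.mem_ofPred_eq]; decide)
    have k3 := key 0 2 3 (by unfold ExH; simp only [Set.mem_ofPred_eq]; decide) (by unfold ExH; simp only [Set.mem_ofPred_eq]; decide)
    have k4 := key 2 3 1 (by unfold ExH; simp only [Set.mem_ofPred_eq]; decide) (by unfold ExH; simp only [Set.mem_ofPred_eq]; decide)
    have k5 := key 1 2 3 (by unfold ExH; simp only [Set.mem_ofPred_eq]; decide) (by unfold ExH; simp only [Set.mem_ofPred_eq]; decide)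
    have k6 := key 1 3 4 (by unfold ExH; simp only [Set.mem_ofPred_eq]; decide) (by unfold ExH; simp only [Set.mem_ofPred_eq]; decide)
    have k7 := key 1 4 0 (by unfold ExH; simp only [Set.mem_ofPred_eq]; decide) (by unfold ExH; simp only [Set.mem_ofPred_eq]; decide)
    obtain ⟨c, hc, r, h1, h0⟩ :=
      ((hA {0, 1, 2}).1 (Or.inl (Finset.Subset.refl _))).first ⟨0, by simp⟩
    have e0 := h0 0 (by simp)
    have e1 := h0 1 (by simp)
    have e2 := h0 2 (by simp)
    specialize k1 r
    specialize k2 r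
    specialize k3 r
    specialize k4 r
    specialize k5 r
    specialize k6 r
    specialize k7 r
    simp only [Finset.mem_insert, Finset.mem_singleton] at hc
    rcases hc with rfl | rfl | rfl <;> simp_all
end
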